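/- Let n ≥ 1 be an integer. For all subsets S, T ⊆ {1,…,n} there exist natural numbers N_{S,T}^U indexed by subsets U ⊆ {1,…,n}, each of which is either zero or a power of 2, such that d_S · d_T = ∑_{U ⊆ {1,…,n}} N_{S,T}^U · d_U. -/

import Mathlib

open Real

/-- `c j = 2·cos(π/2^(j+1))` (so `c 0 = 0`). -/
noncomputable def c (j : ℕ) : ℝ := 2 * Real.cos (π / 2 ^ (j + 1))

/-- `d S = ∏_{j ∈ S} c j` (so `d ∅ = 1`). -/
noncomputable def d (S : Finset ℕ) : ℝ := ∏ j ∈ S, c j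

/-- `x` is a combination of the `d U`, `U ⊆ {1,…,n}`, whose coefficients are zero or powers of two. -/
def IsDyadicComb (n : ℕ) (x : ℝ) : Prop :=
  ∃ N : Finset ℕ → ℕ,
    (∀ U : Finset ℕ, N U = 0 ∨ ∃ e : ℕ, N U = 2 ^ e) ∧
    x = ∑ U ∈ (Finset.Icc 1 n).powerset, (N U : ℝ) * d U

theorem c_zero : c 0 = 0 := by simp [c]

theorem c_succ_sq (j : ℕ) : c (j + 1) * c (j + 1) = 2 + c j := by
  have h : π / 2 ^ (j + 1) = 2 * (π / 2 ^ (j + 1 + 1)) := by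
    rw [pow_succ _ (j + 1)]
    field_simp
  unfold c
  rw [h, Real.cos_two_mul]
  ring

theorem IsDyadicComb.zero (n : ℕ) : IsDyadicComb n 0 :=
  ⟨fun _ => 0, fun _ => Or.inl rfl, by simp⟩

theorem IsDyadicComb.one : IsDyadicComb 0 1 :=
  ⟨fun _ => 1, fun _ => Or.inr ⟨0, rfl⟩, by simp [d]⟩

theorem IsDyadicComb.two_mul {n : ℕ} {x : ℝ} (h : IsDyadicComb n x) :
    IsDyadicComb n (2 * x) := by
  obtain ⟨N, hN, rfl⟩ := h
  refine ⟨fun U => 2 * N U, fun U => ?_, ?_⟩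
  · rcases hN U with h | ⟨e, h⟩
    · exact Or.inl (by simp [h])
    · exact Or.inr ⟨e + 1, by simp only [h, pow_succ, mul_comm]⟩
  · rw [Finset.mul_sum]
    refine Finset.sum_congr rfl fun U _ => ?_
    push_cast
    ring

theorem IsDyadicComb.add_mul_c {n : ℕ} {a b : ℝ} (ha : IsDyadicComb n a)
    (hb : IsDyadicComb n b) : IsDyadicComb (n + 1) (a + b * c (n + 1)) := by
  obtain ⟨A, hA, rfl⟩ := ha
  obtain ⟨B, hB, rfl⟩ := hb
  refine ⟨fun U => if n + 1 ∈ U then B (U.erase (n + 1)) else A U, fun U => ?_, ?_⟩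
  · dsimp only
    split_ifs
    · exact hB _
    · exact hA _
  · rw [← Finset.insert_Icc_right_eq_Icc_add_one (by omega),
      Finset.sum_powerset_insert (by simp), Finset.sum_mul]
    have hU : ∀ U ∈ (Finset.Icc 1 n).powerset, n + 1 ∉ U := fun U hU hmem => by
      have := Finset.mem_Icc.1 (Finset.mem_powerset.1 hU hmem)
      omega
    congr 1
    · exact Finset.sum_congr rfl fun U h => by simp [hU U h]
    · refine Finset.sum_congr rfl fun U h => ?_
      dsimp only
      rw [if_pos (Finset.mem_insert_self _ _), Finset.erase_insert (hU U h), d, d,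
        Finset.prod_insert (hU U h)]
      ring

theorem IsDyadicComb.succ {n : ℕ} {a : ℝ} (ha : IsDyadicComb n a) : IsDyadicComb (n + 1) a := by
  simpa using ha.add_mul_c (.zero n)

theorem IsDyadicComb.mul_c {n : ℕ} {b : ℝ} (hb : IsDyadicComb n b) :
    IsDyadicComb (n + 1) (b * c (n + 1)) := by
  simpa using (IsDyadicComb.zero n).add_mul_c hb

theorem erase_subset_Icc {n : ℕ} {S : Finset ℕ} (hS : S ⊆ Finset.Icc 1 (n + 1)) :
    S.erase (n + 1) ⊆ Finset.Icc 1 n := fun x hx => by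
  have hx' := Finset.mem_erase.1 hx
  have := Finset.mem_Icc.1 (hS hx'.2)
  exact Finset.mem_Icc.2 ⟨this.1, by omega⟩

theorem d_eq_erase_or (S : Finset ℕ) (m : ℕ) : d S = d (S.erase m) ∨ d S = d (S.erase m) * c m := by
  by_cases h : m ∈ S
  · exact Or.inr (Finset.prod_erase_mul S c h).symm
  · exact Or.inl (by rw [Finset.erase_eq_of_notMem h])

/-- The factor `2 + c n` is `c (n + 1) ^ 2`, which makes the induction on `n` close up. -/
theorem isDyadicComb_d_mul_d (n : ℕ) : ∀ S T : Finset ℕ, S ⊆ Finset.Icc 1 n → T ⊆ Finset.Icc 1 n →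
    IsDyadicComb n (d S * d T) ∧ IsDyadicComb n (d S * d T * (2 + c n)) := by
  induction n with
  | zero =>
    intro S T hS hT
    obtain rfl : S = ∅ := by simpa using hS
    obtain rfl : T = ∅ := by simpa using hT
    simpa [d, c_zero] using And.intro IsDyadicComb.one IsDyadicComb.one.two_mul
  | succ n ih =>
    intro S T hS hT
    obtain ⟨h, h'⟩ := ih _ _ (erase_subset_Icc hS) (erase_subset_Icc hT)
    have hc := c_succ_sq n
    rcases d_eq_erase_or S (n + 1) with eS | eS <;> rcases d_eq_erase_or T (n + 1) with eT | eT <;>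
      rw [eS, eT] <;> generalize d (S.erase (n + 1)) = s at * <;>
      generalize d (T.erase (n + 1)) = t at *
    · refine ⟨h.succ, ?_⟩
      convert h.two_mul.add_mul_c h using 1
      ring
    · refine ⟨by simpa only [mul_assoc] using h.mul_c, ?_⟩
      convert h'.add_mul_c h.two_mul using 1
      linear_combination s * t * hc
    · refine ⟨by simpa only [mul_right_comm] using h.mul_c, ?_⟩
      convert h'.add_mul_c h.two_mul using 1
      linear_combination s * t * hc
    · constructor
      · convert h'.succ using 1
        linear_combination s * t * hc
      · convert h'.two_mul.add_mul_c h' using 1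
        linear_combination s * t * (2 + c (n + 1)) * hc

/-- for `S, T ⊆ {1,…,n}` there are natural numbers `N U`, each zero or a
power of `2`, with `d S · d T = ∑_{U ⊆ {1,…,n}} N U · d U`. -/
theorem stmt_4 (n : ℕ) (hn : 1 ≤ n) (S T : Finset ℕ)
    (hS : S ⊆ Finset.Icc 1 n) (hT : T ⊆ Finset.Icc 1 n) :
    ∃ N : Finset ℕ → ℕ,
      (∀ U : Finset ℕ, N U = 0 ∨ ∃ e : ℕ, N U = 2 ^ e) ∧
      d S * d T = ∑ U ∈ (Finset.Icc 1 n).powerset, (N U : ℝ) * d U := by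
  exact (isDyadicComb_d_mul_d n S T hS hT).1
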